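/- Hoffman–Wielandt type bound for p ≥ 2: under the stated setup and assumptions, let Σ = diag(Σ_k, Σ_⊥) and let Σ' = diag(Σ̂, 0) be of conformal size, where Σ̂ contains the singular values of Â = QQ*A. Then for every p ∈ [2,∞] one has ‖Σ − Σ'‖_p ≤ √(‖Σ_⊥‖_p² + γ_k^{4q}·‖Σ_⊥Ω_2Ω_1†‖_p²) in the Schatten-p norm. -/

import Mathlib

open scoped ENNReal
open Matrix

/-- The `j`-th largest singular value (0-indexed) of a complex matrix,
obtained as the decreasingly sorted square roots of the eigenvalues of `Mᴴ * M`. -/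
noncomputable def sval {m n : ℕ} (M : Matrix (Fin m) (Fin n) ℂ) (j : ℕ) : ℝ :=
  (List.insertionSort (· ≥ ·)
    ((List.ofFn (Matrix.isHermitian_conjTranspose_mul_self M).eigenvalues).map Real.sqrt)).getD j 0

/-- The Schatten-`p` norm (`p = ∞` gives the spectral norm). -/
noncomputable def schatten {m n : ℕ} (p : ℝ≥0∞) (M : Matrix (Fin m) (Fin n) ℂ) : ℝ :=
  if p = ⊤ then sval M 0
  else (∑ j ∈ Finset.range n, sval M j ^ p.toReal) ^ (1 / p.toReal)

/-- Moore–Penrose pseudoinverse of a full-row-rank matrix. -/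
noncomputable def rpinv {a b : ℕ} (M : Matrix (Fin a) (Fin b) ℂ) : Matrix (Fin b) (Fin a) ℂ :=
  Mᴴ * (M * Mᴴ)⁻¹

/-- Rectangular diagonal matrix with entries `σ (off), σ (off+1), …` on the diagonal. -/
noncomputable def diagRect (σ : ℕ → ℝ) (off a b : ℕ) : Matrix (Fin a) (Fin b) ℂ :=
  Matrix.of fun i j => if (i : ℕ) = (j : ℕ) then (σ (off + (i : ℕ)) : ℂ) else 0

/-- The first `b` columns of a matrix with `b + c` columns. -/
def colsL {a b c : ℕ} (M : Matrix (Fin a) (Fin (b + c)) ℂ) : Matrix (Fin a) (Fin b) ℂ :=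
  M.submatrix id (Fin.castAdd c)

/-- The last `c` columns of a matrix with `b + c` columns. -/
def colsR {a b c : ℕ} (M : Matrix (Fin a) (Fin (b + c)) ℂ) : Matrix (Fin a) (Fin c) ℂ :=
  M.submatrix id (Fin.natAdd b)

section QuadraticForm

/-- The real part of the sesquilinear form `x* H x`. -/
noncomputable def quadForm {n : ℕ} (H : Matrix (Fin n) (Fin n) ℂ) (x : Fin n → ℂ) : ℝ :=
  (star x ⬝ᵥ H *ᵥ x).re

variable {a b n n' : ℕ}

theorem quadForm_add (H K : Matrix (Fin n) (Fin n) ℂ) (x : Fin n → ℂ) :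
    quadForm (H + K) x = quadForm H x + quadForm K x := by
  simp [quadForm, Matrix.add_mulVec]

theorem quadForm_conj (H : Matrix (Fin a) (Fin a) ℂ) (M : Matrix (Fin a) (Fin b) ℂ)
    (x : Fin b → ℂ) : quadForm (Mᴴ * H * M) x = quadForm H (M *ᵥ x) := by
  simp only [quadForm, Matrix.star_mulVec, ← Matrix.mulVec_mulVec, Matrix.dotProduct_mulVec,
    Matrix.vecMul_vecMul]

theorem quadForm_gram (M : Matrix (Fin a) (Fin b) ℂ) (x : Fin b → ℂ) :
    quadForm (Mᴴ * M) x = quadForm 1 (M *ᵥ x) := by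
  simpa using quadForm_conj 1 M x

theorem quadForm_diagonal (h : Fin n → ℝ) (x : Fin n → ℂ) :
    quadForm (diagonal fun i => (h i : ℂ)) x = ∑ i, h i * ‖x i‖ ^ 2 := by
  simp only [quadForm, dotProduct, Matrix.mulVec_diagonal, Complex.re_sum, Pi.star_apply]
  refine Finset.sum_congr rfl fun i _ => ?_
  rw [← Complex.normSq_eq_norm_sq, Complex.normSq_apply]
  simp
  ring

theorem quadForm_one (x : Fin n → ℂ) : quadForm 1 x = ∑ i, ‖x i‖ ^ 2 := by
  have h := quadForm_diagonal (fun _ => 1) x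
  simpa using h

theorem quadForm_one_nonneg (x : Fin n → ℂ) : 0 ≤ quadForm 1 x := by
  rw [quadForm_one]; positivity

theorem quadForm_one_pos {x : Fin n → ℂ} (hx : x ≠ 0) : 0 < quadForm 1 x := by
  obtain ⟨i, hi⟩ := Function.ne_iff.mp hx
  rw [quadForm_one]
  exact Finset.sum_pos' (fun _ _ => by positivity)
    ⟨i, Finset.mem_univ i, by have := norm_pos_iff.mpr hi; positivity⟩

theorem quadForm_one_mulVec_of_isometry {M : Matrix (Fin a) (Fin b) ℂ} (hM : Mᴴ * M = 1)
    (x : Fin b → ℂ) : quadForm 1 (M *ᵥ x) = quadForm 1 x := by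
  rw [← quadForm_gram, hM]

/-- Pythagoras: a vector splits into its projection on the range of `Q` and the residual. -/
theorem quadForm_one_eq_add_residual {Q : Matrix (Fin a) (Fin b) ℂ} (hQ : Qᴴ * Q = 1)
    (x : Fin a → ℂ) :
    quadForm 1 x = quadForm 1 (Qᴴ *ᵥ x) + quadForm 1 ((1 - Q * Qᴴ) *ᵥ x) := by
  rw [← quadForm_gram, ← quadForm_gram, ← quadForm_add]
  congr 1
  have h : Q * Qᴴ * (Q * Qᴴ) = Q * Qᴴ := by
    rw [Matrix.mul_assoc, ← Matrix.mul_assoc Qᴴ, hQ, Matrix.one_mul]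
  simp [Matrix.mul_sub, Matrix.sub_mul, h]

theorem quadForm_one_conjTranspose_mulVec_le {Q : Matrix (Fin a) (Fin b) ℂ} (hQ : Qᴴ * Q = 1)
    (x : Fin a → ℂ) : quadForm 1 (Qᴴ *ᵥ x) ≤ quadForm 1 x := by
  have := quadForm_one_nonneg ((1 - Q * Qᴴ) *ᵥ x)
  linarith [quadForm_one_eq_add_residual hQ x]

theorem quadForm_one_residual_le {Q : Matrix (Fin a) (Fin b) ℂ} (hQ : Qᴴ * Q = 1)
    (x : Fin a → ℂ) : quadForm 1 ((1 - Q * Qᴴ) *ᵥ x) ≤ quadForm 1 x := by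
  have := quadForm_one_nonneg (Qᴴ *ᵥ x)
  linarith [quadForm_one_eq_add_residual hQ x]

theorem quadForm_one_diagonal_mulVec_le {d : Fin n → ℝ} {c : ℝ} (hd0 : ∀ i, 0 ≤ d i)
    (hd : ∀ i, d i ≤ c) (x : Fin n → ℂ) :
    quadForm 1 ((diagonal fun i => (d i : ℂ)) *ᵥ x) ≤ c ^ 2 * quadForm 1 x := by
  rw [quadForm_one, quadForm_one, Finset.mul_sum]
  refine Finset.sum_le_sum fun i _ => ?_
  rw [Matrix.mulVec_diagonal, norm_mul, mul_pow, Complex.norm_real, Real.norm_eq_abs, sq_abs]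
  have := pow_le_pow_left₀ (hd0 i) (hd i) 2
  gcongr

/-- The dimension count behind the min-max principle: some nonzero vector is supported on the
first `i + 1` coordinates while its image vanishes in the first `i` coordinates. -/
theorem exists_ne_zero_support_le_mulVec_eq_zero (T : Matrix (Fin n') (Fin n) ℂ) (i : Fin n) :
    ∃ x : Fin n → ℂ, x ≠ 0 ∧ (∀ j, i < j → x j = 0) ∧
      ∀ j : Fin n', (j : ℕ) < i → (T *ᵥ x) j = 0 := by
  let E : (Fin (i + 1) → ℂ) →ₗ[ℂ] (Fin n → ℂ) :=
    { toFun := fun y j => if h : (j : ℕ) < i + 1 then y ⟨j, h⟩ else 0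
      map_add' := fun y z => by ext j; simp only [Pi.add_apply]; split_ifs <;> simp
      map_smul' := fun c y => by ext j; simp only [Pi.smul_apply]; split_ifs <;> simp }
  let P : (Fin n' → ℂ) →ₗ[ℂ] (Fin i → ℂ) :=
    { toFun := fun z l => if h : (l : ℕ) < n' then z ⟨l, h⟩ else 0
      map_add' := fun y z => by ext l; simp only [Pi.add_apply]; split_ifs <;> simp
      map_smul' := fun c y => by ext l; simp only [Pi.smul_apply]; split_ifs <;> simp }
  have hker : LinearMap.ker (P ∘ₗ T.mulVecLin ∘ₗ E) ≠ ⊥ :=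
    LinearMap.ker_ne_bot_of_finrank_lt (by simp)
  obtain ⟨y, hy, hy0⟩ := Submodule.exists_mem_ne_zero_of_ne_bot hker
  refine ⟨E y, fun h => hy0 ?_, fun j hj => ?_, fun j hj => ?_⟩
  · ext l
    have hl : (l : ℕ) < n := by omega
    have := congrFun h ⟨l, hl⟩
    exact (dif_pos l.isLt).symm.trans this
  · exact dif_neg (by have : (i : ℕ) < j := hj; omega)
  · have := congrFun (LinearMap.mem_ker.mp hy) ⟨j, hj⟩
    simpa [P] using this

theorem quadForm_diagonal_ge_of_support {h : Fin n → ℝ} (hh : Antitone h) {i : Fin n}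
    {x : Fin n → ℂ} (hx : ∀ j, i < j → x j = 0) :
    h i * quadForm 1 x ≤ quadForm (diagonal fun j => (h j : ℂ)) x := by
  rw [quadForm_diagonal, quadForm_one, Finset.mul_sum]
  refine Finset.sum_le_sum fun j _ => ?_
  rcases lt_or_ge i j with hij | hij
  · simp [hx j hij]
  · exact mul_le_mul_of_nonneg_right (hh hij) (by positivity)

theorem quadForm_diagonal_le_of_support {h : Fin n → ℝ} {c : ℝ} {i : ℕ}
    (hc : ∀ j : Fin n, i ≤ j → h j ≤ c) {x : Fin n → ℂ} (hx : ∀ j : Fin n, (j : ℕ) < i → x j = 0) :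
    quadForm (diagonal fun j => (h j : ℂ)) x ≤ c * quadForm 1 x := by
  rw [quadForm_diagonal, quadForm_one, Finset.mul_sum]
  refine Finset.sum_le_sum fun j _ => ?_
  rcases lt_or_ge (j : ℕ) i with hij | hij
  · simp [hx j hij]
  · exact mul_le_mul_of_nonneg_right (hc j hij) (by positivity)

/-- Eigenvalue comparison under a bounded change of variables. -/
theorem diagonal_le_of_quadForm_le {h : Fin n → ℝ} (hh : Antitone h) {κ : Fin n' → ℝ}
    (T : Matrix (Fin n') (Fin n) ℂ) {α β c : ℝ} (hα : 0 ≤ α) (hc : 0 ≤ c)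
    (hform : ∀ x, quadForm (diagonal fun j => (h j : ℂ)) x ≤
      α * quadForm (diagonal fun j => (κ j : ℂ)) (T *ᵥ x))
    (hT : ∀ x, quadForm 1 (T *ᵥ x) ≤ β * quadForm 1 x)
    (i : Fin n) (hκ : ∀ j : Fin n', (i : ℕ) ≤ j → κ j ≤ c) : h i ≤ α * c * β := by
  obtain ⟨x, hx0, hx, hTx⟩ := exists_ne_zero_support_le_mulVec_eq_zero T i
  refine le_of_mul_le_mul_right ?_ (quadForm_one_pos hx0)
  calc h i * quadForm 1 x ≤ α * quadForm (diagonal fun j => (κ j : ℂ)) (T *ᵥ x) :=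
        (quadForm_diagonal_ge_of_support hh hx).trans (hform x)
    _ ≤ α * (c * quadForm 1 (T *ᵥ x)) := by
        gcongr; exact quadForm_diagonal_le_of_support hκ hTx
    _ ≤ α * (c * (β * quadForm 1 x)) := by gcongr; exact hT x
    _ = α * c * β * quadForm 1 x := by ring

end QuadraticForm

section SortedSpectrum

variable {n : ℕ}

/-- `W` diagonalises `K` unitarily, with the eigenvalues `μ` in decreasing order. -/
structure IsSortedSpectral (K : Matrix (Fin n) (Fin n) ℂ) (μ : Fin n → ℝ)
    (W : Matrix (Fin n) (Fin n) ℂ) : Prop where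
  antitone : Antitone μ
  conjTranspose_mul : Wᴴ * W = 1
  mul_conjTranspose : W * Wᴴ = 1
  eq : K = W * diagonal (fun i => (μ i : ℂ)) * Wᴴ

theorem Matrix.IsHermitian.exists_isSortedSpectral {K : Matrix (Fin n) (Fin n) ℂ}
    (hK : K.IsHermitian) :
    ∃ (e : Equiv.Perm (Fin n)) (W : Matrix (Fin n) (Fin n) ℂ),
      IsSortedSpectral K (hK.eigenvalues ∘ e) W := by
  let e := Tuple.sort fun i => -hK.eigenvalues i
  let V : Matrix (Fin n) (Fin n) ℂ := hK.eigenvectorUnitary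
  have hV : Vᴴ * V = 1 := Unitary.coe_star_mul_self hK.eigenvectorUnitary
  have hV' : V * Vᴴ = 1 := Unitary.coe_mul_star_self hK.eigenvectorUnitary
  have hK' : K = V * diagonal (fun i => (hK.eigenvalues i : ℂ)) * Vᴴ := by
    have := hK.spectral_theorem
    rw [Unitary.conjStarAlgAut_apply] at this
    exact this
  have hanti : Antitone (hK.eigenvalues ∘ e) := fun i j hij => by
    simpa using Tuple.monotone_sort (fun i => -hK.eigenvalues i) hij
  refine ⟨e, V.submatrix id e, hanti, ?_, ?_, ?_⟩
  · rw [conjTranspose_submatrix, ← submatrix_mul _ _ _ id _ Function.bijective_id, hV,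
      submatrix_one_equiv]
  · rw [conjTranspose_submatrix, submatrix_mul_equiv, hV', submatrix_id_id]
  · have hd : diagonal (fun i => ((hK.eigenvalues ∘ e) i : ℂ)) =
        (diagonal fun i => (hK.eigenvalues i : ℂ)).submatrix e e := by
      rw [submatrix_diagonal_equiv]; rfl
    rw [hd, conjTranspose_submatrix, submatrix_mul_equiv, submatrix_mul_equiv, submatrix_id_id]
    exact hK'

namespace IsSortedSpectral

variable {K L : Matrix (Fin n) (Fin n) ℂ} {μ ν : Fin n → ℝ} {W W' : Matrix (Fin n) (Fin n) ℂ}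

theorem quadForm_mulVec (h : IsSortedSpectral K μ W) (x : Fin n → ℂ) :
    quadForm K (W *ᵥ x) = quadForm (diagonal fun i => (μ i : ℂ)) x := by
  have : diagonal (fun i => (μ i : ℂ)) = Wᴴ * K * W := by
    rw [h.eq]
    simp only [Matrix.mul_assoc, h.conjTranspose_mul, Matrix.mul_one]
    rw [← Matrix.mul_assoc, h.conjTranspose_mul, Matrix.one_mul]
  rw [this, quadForm_conj]

theorem quadForm_eq (h : IsSortedSpectral K μ W) (x : Fin n → ℂ) :
    quadForm K x = quadForm (diagonal fun i => (μ i : ℂ)) (Wᴴ *ᵥ x) := by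
  rw [← h.quadForm_mulVec, mulVec_mulVec, h.mul_conjTranspose, one_mulVec]

theorem trace_eq (h : IsSortedSpectral K μ W) : K.trace = ((∑ i, μ i : ℝ) : ℂ) := by
  rw [h.eq, Matrix.trace_mul_comm, ← Matrix.mul_assoc, h.conjTranspose_mul, Matrix.one_mul,
    Matrix.trace_diagonal]
  push_cast; rfl

/-- Weyl monotonicity of the sorted eigenvalues. -/
theorem le_add_of_quadForm_le (h : IsSortedSpectral K μ W) (h' : IsSortedSpectral L ν W') {t : ℝ}
    (hKL : ∀ x, quadForm K x ≤ quadForm L x + t * quadForm 1 x) (i : Fin n) :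
    μ i ≤ ν i + t := by
  obtain ⟨x, hx0, hx, hTx⟩ := exists_ne_zero_support_le_mulVec_eq_zero (W'ᴴ * W) i
  have hlow := quadForm_diagonal_ge_of_support h.antitone hx
  have hupp := quadForm_diagonal_le_of_support (h := ν) (c := ν i) (i := i)
    (fun j hj => h'.antitone hj) hTx
  have hform := hKL (W *ᵥ x)
  rw [h.quadForm_mulVec, h'.quadForm_eq, mulVec_mulVec,
    quadForm_one_mulVec_of_isometry h.conjTranspose_mul] at hform
  have hnorm : quadForm 1 ((W'ᴴ * W) *ᵥ x) = quadForm 1 x := by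
    rw [← mulVec_mulVec, quadForm_one_mulVec_of_isometry
      (by rw [conjTranspose_conjTranspose, h'.mul_conjTranspose]),
      quadForm_one_mulVec_of_isometry h.conjTranspose_mul]
  rw [hnorm] at hupp
  refine le_of_mul_le_mul_right ?_ (quadForm_one_pos hx0)
  linarith

/-- Lidskii-type weak majorization: if `H ≤ K + G`, the eigenvalue gaps between `H` and `K` are
dominated, after truncation at any level, by the eigenvalues of `G`. -/
theorem sum_posPart_sub_le {H K G : Matrix (Fin n) (Fin n) ℂ} {η κ g : Fin n → ℝ}
    {WH WK WG : Matrix (Fin n) (Fin n) ℂ} (hH : IsSortedSpectral H η WH)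
    (hK : IsSortedSpectral K κ WK) (hG : IsSortedSpectral G g WG)
    (hle : ∀ x, quadForm H x ≤ quadForm K x + quadForm G x) (t : ℝ) :
    ∑ i, max (η i - κ i - t) 0 ≤ ∑ i, max (g i - t) 0 := by
  set P : Matrix (Fin n) (Fin n) ℂ :=
    WG * diagonal (fun i => ((max (g i - t) 0 : ℝ) : ℂ)) * WGᴴ with hP
  have hPherm : P.IsHermitian := Matrix.isHermitian_mul_mul_conjTranspose WG
    (Matrix.isHermitian_diagonal_of_self_adjoint _ (by ext i; simp))
  have hKherm : K.IsHermitian := by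
    rw [hK.eq]
    exact Matrix.isHermitian_mul_mul_conjTranspose WK
      (Matrix.isHermitian_diagonal_of_self_adjoint _ (by ext i; simp))
  have hPform : ∀ x, quadForm P x = ∑ i, max (g i - t) 0 * ‖(WGᴴ *ᵥ x) i‖ ^ 2 := fun x => by
    rw [← quadForm_diagonal, ← quadForm_conj, conjTranspose_conjTranspose]
  obtain ⟨e, W, hL⟩ := (hKherm.add hPherm).exists_isSortedSpectral
  set ν := (hKherm.add hPherm).eigenvalues ∘ e
  have hKν : ∀ i, κ i ≤ ν i := fun i => by
    have := hK.le_add_of_quadForm_le hL (t := 0) (fun x => by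
      rw [quadForm_add, hPform]
      have : 0 ≤ ∑ i, max (g i - t) 0 * ‖(WGᴴ *ᵥ x) i‖ ^ 2 :=
        Finset.sum_nonneg fun i _ => mul_nonneg (le_max_right _ _) (by positivity)
      linarith) i
    linarith
  have hHν : ∀ i, η i ≤ ν i + t := hH.le_add_of_quadForm_le hL fun x => by
    have hGP : quadForm G x ≤ quadForm P x + t * quadForm 1 x := by
      rw [hG.quadForm_eq, quadForm_diagonal, hPform, ← quadForm_one_mulVec_of_isometry
        (M := WGᴴ) (by rw [conjTranspose_conjTranspose, hG.mul_conjTranspose]) x, quadForm_one,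
        Finset.mul_sum, ← Finset.sum_add_distrib]
      refine Finset.sum_le_sum fun i _ => ?_
      rw [← add_mul]
      exact mul_le_mul_of_nonneg_right (by linarith [le_max_left (g i - t) 0]) (by positivity)
    rw [quadForm_add]
    linarith [hle x]
  have htrace : ∑ i, ν i = ∑ i, κ i + ∑ i, max (g i - t) 0 := by
    have h1 := hL.trace_eq
    have h2 : P.trace = ((∑ i, max (g i - t) 0 : ℝ) : ℂ) := by
      rw [hP, Matrix.trace_mul_comm, ← Matrix.mul_assoc, hG.conjTranspose_mul, Matrix.one_mul,
        Matrix.trace_diagonal]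
      push_cast; rfl
    rw [Matrix.trace_add, hK.trace_eq, h2] at h1
    exact_mod_cast h1.symm
  calc ∑ i, max (η i - κ i - t) 0 ≤ ∑ i, (ν i - κ i) :=
        Finset.sum_le_sum fun i _ => max_le (by linarith [hHν i]) (by linarith [hKν i])
    _ = ∑ i, max (g i - t) 0 := by rw [Finset.sum_sub_distrib, htrace]; ring

end IsSortedSpectral

end SortedSpectrum

section PowerSums

/-- For `r > 1`, the power `x ^ r` is a nonnegative superposition of the functions
`x ↦ max (x - t) 0`. -/
theorem integral_rpow_mul_posPart {r x M : ℝ} (hr : 1 < r) (hx : 0 ≤ x) (hxM : x ≤ M) :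
    ∫ t in (0 : ℝ)..M, t ^ (r - 2) * max (x - t) 0 = x ^ r / (r * (r - 1)) := by
  have hint : ∀ a b : ℝ,
      IntervalIntegrable (fun t : ℝ => t ^ (r - 2) * max (x - t) 0) MeasureTheory.volume a b :=
    fun a b => (intervalIntegral.intervalIntegrable_rpow' (by linarith)).mul_continuousOn
      (by fun_prop)
  rw [← intervalIntegral.integral_add_adjacent_intervals (hint 0 x) (hint x M)]
  have h2 : ∫ t in x..M, t ^ (r - 2) * max (x - t) 0 = 0 := by
    rw [intervalIntegral.integral_congr (g := fun _ => (0 : ℝ))]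
    · simp
    · intro t ht
      rw [Set.uIcc_of_le hxM] at ht
      simp [max_eq_right (sub_nonpos.mpr ht.1)]
  have h1 : ∫ t in (0 : ℝ)..x, t ^ (r - 2) * max (x - t) 0 =
      ∫ t in (0 : ℝ)..x, (x * t ^ (r - 2) - t ^ (r - 1)) := by
    refine intervalIntegral.integral_congr_ae (Filter.Eventually.of_forall fun t ht => ?_)
    rw [Set.uIoc_of_le hx] at ht
    rw [max_eq_left (sub_nonneg.mpr ht.2), show r - 1 = (r - 2) + 1 by ring,
      Real.rpow_add_one ht.1.ne']
    ring
  rw [h1, h2, add_zero, intervalIntegral.integral_sub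
    ((intervalIntegral.intervalIntegrable_rpow' (by linarith)).const_mul x)
    (intervalIntegral.intervalIntegrable_rpow' (by linarith)),
    intervalIntegral.integral_const_mul, integral_rpow (Or.inl (by linarith)),
    integral_rpow (Or.inl (by linarith)), show r - 2 + 1 = r - 1 by ring,
    show r - 1 + 1 = r by ring, Real.zero_rpow (by linarith), Real.zero_rpow (by linarith)]
  rcases hx.eq_or_lt with rfl | hx'
  · simp [Real.zero_rpow (show r ≠ 0 by linarith)]
  · have hxr : x ^ r = x * x ^ (r - 1) := by
      rw [← Real.rpow_one_add' hx (by linarith)]; congr 1; ring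
    have h3 : r - 1 ≠ 0 := by linarith
    have h4 : r ≠ 0 := by linarith
    rw [hxr]
    field_simp
    ring

/-- Weak majorization, in truncated-sum form, bounds sums of `r`-th powers for `r ≥ 1`. -/
theorem sum_rpow_le_of_sum_posPart_le {ι : Type*} [Fintype ι] {d g : ι → ℝ} (hd : ∀ i, 0 ≤ d i)
    (hg : ∀ i, 0 ≤ g i) (h : ∀ t, 0 ≤ t → ∑ i, max (d i - t) 0 ≤ ∑ i, max (g i - t) 0)
    {r : ℝ} (hr : 1 ≤ r) : ∑ i, d i ^ r ≤ ∑ i, g i ^ r := by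
  rcases hr.eq_or_lt with rfl | hr
  · simpa [hd, hg] using h 0 le_rfl
  set M : ℝ := ∑ i, d i + ∑ i, g i
  have hdM : ∀ i, d i ≤ M := fun i =>
    (Finset.single_le_sum (fun j _ => hd j) (Finset.mem_univ i)).trans
      (le_add_of_nonneg_right (Finset.sum_nonneg fun j _ => hg j))
  have hgM : ∀ i, g i ≤ M := fun i =>
    (Finset.single_le_sum (fun j _ => hg j) (Finset.mem_univ i)).trans
      (le_add_of_nonneg_left (Finset.sum_nonneg fun j _ => hd j))
  have hM : 0 ≤ M := add_nonneg (Finset.sum_nonneg fun j _ => hd j)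
    (Finset.sum_nonneg fun j _ => hg j)
  have hint : ∀ y : ℝ,
      IntervalIntegrable (fun t : ℝ => t ^ (r - 2) * max (y - t) 0) MeasureTheory.volume 0 M :=
    fun y => (intervalIntegral.intervalIntegrable_rpow' (by linarith)).mul_continuousOn
      (by fun_prop)
  have hsum : ∀ y : ι → ℝ, (∀ i, 0 ≤ y i) → (∀ i, y i ≤ M) →
      ∫ t in (0 : ℝ)..M, ∑ i, t ^ (r - 2) * max (y i - t) 0 =
        (∑ i, y i ^ r) / (r * (r - 1)) := fun y hy hyM => by
    rw [intervalIntegral.integral_finsetSum fun i _ => hint (y i), Finset.sum_div]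
    exact Finset.sum_congr rfl fun i _ => integral_rpow_mul_posPart hr (hy i) (hyM i)
  have hpos : 0 < r * (r - 1) := mul_pos (by linarith) (by linarith)
  rw [← div_le_div_iff_of_pos_right hpos, ← hsum d hd hdM, ← hsum g hg hgM]
  have hII : ∀ y : ι → ℝ, IntervalIntegrable
      (fun t : ℝ => ∑ i, t ^ (r - 2) * max (y i - t) 0) MeasureTheory.volume 0 M := fun y => by
    simp only [← Finset.mul_sum]
    exact (intervalIntegral.intervalIntegrable_rpow' (by linarith)).mul_continuousOn (by fun_prop)
  refine intervalIntegral.integral_mono_on hM (hII d) (hII g) fun t ht => ?_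
  rw [← Finset.mul_sum, ← Finset.mul_sum]
  exact mul_le_mul_of_nonneg_left (h t ht.1) (Real.rpow_nonneg ht.1 _)

end PowerSums

section Schatten

variable {m n : ℕ}

open scoped ComplexOrder in
theorem eigenvalues_gram_nonneg (M : Matrix (Fin m) (Fin n) ℂ) (i : Fin n) :
    0 ≤ (Matrix.isHermitian_conjTranspose_mul_self M).eigenvalues i :=
  (Matrix.posSemidef_conjTranspose_mul_self M).eigenvalues_nonneg i

theorem sval_nonneg (M : Matrix (Fin m) (Fin n) ℂ) (j : ℕ) : 0 ≤ sval M j := by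
  unfold sval
  rw [List.getD_eq_getElem?_getD]
  rcases h : (List.insertionSort (· ≥ ·) ((List.ofFn
    (Matrix.isHermitian_conjTranspose_mul_self M).eigenvalues).map Real.sqrt))[j]? with _ | x
  · simp
  · have hx := List.mem_of_getElem? h
    rw [List.mem_insertionSort, List.mem_map] at hx
    obtain ⟨y, _, rfl⟩ := hx
    exact Real.sqrt_nonneg y

theorem sval_le_sval_zero (M : Matrix (Fin m) (Fin n) ℂ) (j : ℕ) : sval M j ≤ sval M 0 := by
  set l := List.insertionSort (· ≥ ·) ((List.ofFn
    (Matrix.isHermitian_conjTranspose_mul_self M).eigenvalues).map Real.sqrt)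
  have hsort : l.Pairwise (· ≥ ·) := List.pairwise_insertionSort _ _
  rcases lt_or_ge j l.length with hj | hj
  · rcases Nat.eq_zero_or_pos j with rfl | hpos
    · rfl
    have h0 : 0 < l.length := by omega
    have := List.pairwise_iff_getElem.mp hsort 0 j h0 hj hpos
    change l.getD j 0 ≤ l.getD 0 0
    rwa [List.getD_eq_getElem _ _ hj, List.getD_eq_getElem _ _ h0]
  · have : sval M j = 0 := List.getD_eq_default _ _ hj
    rw [this]
    exact sval_nonneg M 0

theorem sum_sval (M : Matrix (Fin m) (Fin n) ℂ) (f : ℝ → ℝ) :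
    ∑ j ∈ Finset.range n, f (sval M j) =
      ∑ i, f √((Matrix.isHermitian_conjTranspose_mul_self M).eigenvalues i) := by
  set l := (List.ofFn
    (Matrix.isHermitian_conjTranspose_mul_self M).eigenvalues).map Real.sqrt with hl
  have hlen : (List.insertionSort (· ≥ ·) l).length = n := by simp [hl]
  have hsum : ∑ j ∈ Finset.range n, f (sval M j) = ((List.insertionSort (· ≥ ·) l).map f).sum := by
    rw [Finset.sum_range, ← List.sum_ofFn]
    congr 1
    refine List.ext_getElem (by simp [hl]) fun i h₁ h₂ => ?_
    have hi : i < (List.insertionSort (· ≥ ·) l).length := by simpa using h₂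
    simp only [List.getElem_ofFn, List.getElem_map]
    exact congrArg f (List.getD_eq_getElem _ _ hi)
  rw [hsum, ((List.perm_insertionSort (· ≥ ·) l).map f).sum_eq, hl, List.map_map, List.map_ofFn,
    List.sum_ofFn]
  rfl

theorem schatten_of_ne_top {p : ℝ≥0∞} (hp : p ≠ ⊤) (M : Matrix (Fin m) (Fin n) ℂ) :
    schatten p M = (∑ i, (Matrix.isHermitian_conjTranspose_mul_self M).eigenvalues i ^
      (p.toReal / 2)) ^ (1 / p.toReal) := by
  rw [schatten, if_neg hp, sum_sval M fun x => x ^ p.toReal]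
  congr 1
  refine Finset.sum_congr rfl fun i _ => ?_
  rw [Real.sqrt_eq_rpow, ← Real.rpow_mul (eigenvalues_gram_nonneg M i)]
  congr 1; ring

theorem schatten_sq_of_ne_top {p : ℝ≥0∞} (hp : p ≠ ⊤) (M : Matrix (Fin m) (Fin n) ℂ) :
    schatten p M ^ 2 = (∑ i, (Matrix.isHermitian_conjTranspose_mul_self M).eigenvalues i ^
      (p.toReal / 2)) ^ (1 / (p.toReal / 2)) := by
  rw [schatten_of_ne_top hp, ← Real.rpow_natCast, ← Real.rpow_mul (Finset.sum_nonneg fun i _ =>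
    Real.rpow_nonneg (eigenvalues_gram_nonneg M i) _)]
  congr 1; push_cast; rw [one_div_div]; ring

theorem sum_eigenvalues_of_eq_diagonal {K : Matrix (Fin n) (Fin n) ℂ} (hK : K.IsHermitian)
    {d : Fin n → ℝ} (hd : K = diagonal fun i => (d i : ℂ)) (f : ℝ → ℝ) :
    ∑ i, f (hK.eigenvalues i) = ∑ i, f (d i) := by
  have h1 := hK.roots_charpoly_eq_eigenvalues
  have h2 : K.charpoly.roots = Multiset.map (fun i => (d i : ℂ)) Finset.univ.val := by
    rw [hd, Matrix.charpoly_diagonal, Polynomial.roots_prod]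
    · simp
    · simp [Finset.prod_ne_zero_iff, Polynomial.X_sub_C_ne_zero]
  have h3 := congrArg (Multiset.map fun z : ℂ => f z.re) (h1.symm.trans h2)
  rw [Multiset.map_map, Multiset.map_map] at h3
  exact congrArg Multiset.sum h3

theorem tendsto_schatten_top (M : Matrix (Fin m) (Fin n) ℂ) :
    Filter.Tendsto (fun p : ℝ => schatten (ENNReal.ofReal p) M) Filter.atTop
      (nhds (schatten ⊤ M)) := by
  have htop : schatten ⊤ M = sval M 0 := if_pos rfl
  have hp : ∀ p : ℝ, 0 < p → schatten (ENNReal.ofReal p) M =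
      (∑ j ∈ Finset.range n, sval M j ^ p) ^ (1 / p) := fun p hp => by
    rw [schatten, if_neg ENNReal.ofReal_ne_top, ENNReal.toReal_ofReal hp.le]
  rw [htop]
  rcases Nat.eq_zero_or_pos n with rfl | hn
  · have h0 : sval M 0 = 0 := by simp [sval]
    rw [h0]
    refine tendsto_const_nhds.congr' ?_
    filter_upwards [Filter.eventually_gt_atTop 0] with p hp0
    rw [hp p hp0, Finset.range_zero, Finset.sum_empty, Real.zero_rpow (by positivity)]
  have hlim : Filter.Tendsto (fun p : ℝ => (n : ℝ) ^ (1 / p) * sval M 0) Filter.atTop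
      (nhds (sval M 0)) := by
    have h1 : Filter.Tendsto (fun p : ℝ => (n : ℝ) ^ (1 / p)) Filter.atTop (nhds 1) := by
      have := (tendsto_const_nhds (x := (n : ℝ))).rpow
        (Filter.Tendsto.div_atTop (tendsto_const_nhds (x := (1 : ℝ))) Filter.tendsto_id)
        (Or.inl (by positivity))
      simpa using this
    simpa using h1.mul_const (sval M 0)
  refine tendsto_of_tendsto_of_tendsto_of_le_of_le' tendsto_const_nhds hlim ?_ ?_
  · filter_upwards [Filter.eventually_gt_atTop 0] with p hp0
    rw [hp p hp0, one_div, Real.le_rpow_inv_iff_of_pos (sval_nonneg M 0)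
      (Finset.sum_nonneg fun j _ => Real.rpow_nonneg (sval_nonneg M j) p) hp0]
    exact Finset.single_le_sum (f := fun j => sval M j ^ p)
      (fun j _ => Real.rpow_nonneg (sval_nonneg M j) p) (Finset.mem_range.mpr hn)
  · filter_upwards [Filter.eventually_gt_atTop 0] with p hp0
    rw [hp p hp0]
    calc (∑ j ∈ Finset.range n, sval M j ^ p) ^ (1 / p)
        ≤ (∑ j ∈ Finset.range n, sval M 0 ^ p) ^ (1 / p) := by
          refine Real.rpow_le_rpow (Finset.sum_nonneg fun j _ =>
            Real.rpow_nonneg (sval_nonneg M j) p) (Finset.sum_le_sum fun j _ => ?_) (by positivity)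
          exact Real.rpow_le_rpow (sval_nonneg M j) (sval_le_sval_zero M j) hp0.le
      _ = (n : ℝ) ^ (1 / p) * sval M 0 := by
          rw [Finset.sum_const, Finset.card_range, nsmul_eq_mul,
            Real.mul_rpow (by positivity) (Real.rpow_nonneg (sval_nonneg M 0) p), one_div,
            Real.rpow_rpow_inv (sval_nonneg M 0) hp0.ne']

end Schatten

section DiagRect

theorem diagRect_conjTranspose_mul (σ τ : ℕ → ℝ) (off a b : ℕ) :
    (diagRect σ off a b)ᴴ * diagRect τ off a b =
      diagonal fun j : Fin b => ((if (j : ℕ) < a then σ (off + j) * τ (off + j) else 0 : ℝ) : ℂ) := by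
  ext i j
  rw [Matrix.mul_apply, Matrix.diagonal_apply]
  simp only [diagRect, Matrix.conjTranspose_apply, Matrix.of_apply]
  by_cases hi : (i : ℕ) < a
  · rw [Finset.sum_eq_single ⟨i, hi⟩]
    · by_cases hij : i = j
      · subst hij; simp [hi]
      · have : (i : ℕ) ≠ j := fun h => hij (Fin.ext h)
        simp [hij, this]
    · intro l _ hl
      have : (l : ℕ) ≠ i := fun h => hl (Fin.ext h)
      simp [this]
    · simp
  · rw [Finset.sum_eq_zero]
    · simp [hi]
    · intro l _
      have : (l : ℕ) ≠ i := by omega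
      simp [this]

theorem schatten_sq_diagRect {p : ℝ≥0∞} (hp : p ≠ ⊤) (σ : ℕ → ℝ) (off a b : ℕ) :
    schatten p (diagRect σ off a b) ^ 2 =
      (∑ j : Fin b, (if (j : ℕ) < a then σ (off + j) ^ 2 else 0) ^ (p.toReal / 2)) ^
        (1 / (p.toReal / 2)) := by
  rw [schatten_sq_of_ne_top hp]
  congr 1
  simp only [sq]
  exact sum_eigenvalues_of_eq_diagonal _ (diagRect_conjTranspose_mul σ σ off a b)
    fun x => x ^ (p.toReal / 2)

theorem diagRect_sub (σ τ : ℕ → ℝ) (off a b : ℕ) :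
    diagRect σ off a b - diagRect τ off a b = diagRect (fun i => σ i - τ i) off a b := by
  ext i j
  simp only [diagRect, Matrix.sub_apply, Matrix.of_apply]
  split_ifs <;> simp

theorem diagRect_eq_diagonal_mul (σ τ : ℕ → ℝ) (off a b : ℕ) :
    diagRect (fun i => σ i * τ i) off a b =
      (diagonal fun i : Fin a => (σ (off + i) : ℂ)) * diagRect τ off a b := by
  ext i j
  rw [Matrix.diagonal_mul]
  simp only [diagRect, Matrix.of_apply]
  split_ifs <;> simp

theorem diagRect_mul_conjTranspose_mul (σ τ : ℕ → ℝ) (a b : ℕ) :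
    diagRect σ 0 a b * (diagRect σ 0 a b)ᴴ * diagRect τ 0 a b =
      diagRect (fun i => σ i ^ 2 * τ i) 0 a b := by
  rw [Matrix.mul_assoc, diagRect_conjTranspose_mul]
  ext i j
  rw [Matrix.mul_diagonal]
  simp only [diagRect, Matrix.of_apply]
  by_cases hij : (i : ℕ) = j
  · have : (j : ℕ) < a := hij ▸ i.isLt
    simp [hij, this]; ring
  · simp [hij]

end DiagRect

section Blocks

variable {a b k m₂ n₂ : ℕ}

theorem mul_conjTranspose_eq_cols (M : Matrix (Fin a) (Fin (k + n₂)) ℂ)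
    (V : Matrix (Fin b) (Fin (k + n₂)) ℂ) :
    M * Vᴴ = colsL M * (colsL V)ᴴ + colsR M * (colsR V)ᴴ := by
  ext i j
  simp [Matrix.mul_apply, Fin.sum_univ_add, colsL, colsR]

theorem colsL_mul_diagRect (U : Matrix (Fin a) (Fin (k + m₂)) ℂ) (τ : ℕ → ℝ) :
    colsL (U * diagRect τ 0 (k + m₂) (k + n₂)) =
      colsL U * diagonal fun i : Fin k => (τ i : ℂ) := by
  ext i j
  rw [Matrix.mul_diagonal]
  simp only [colsL, Matrix.submatrix_apply, id, Matrix.mul_apply, diagRect, Matrix.of_apply]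
  rw [Finset.sum_eq_single (Fin.castAdd m₂ j)]
  · simp
  · intro l _ hl
    have : (l : ℕ) ≠ j := fun h => hl (Fin.ext h)
    simp [this]
  · simp

theorem colsR_mul_diagRect (U : Matrix (Fin a) (Fin (k + m₂)) ℂ) (τ : ℕ → ℝ) :
    colsR (U * diagRect τ 0 (k + m₂) (k + n₂)) = colsR U * diagRect τ k m₂ n₂ := by
  ext i j
  simp only [colsR, Matrix.submatrix_apply, id, Matrix.mul_apply, diagRect, Matrix.of_apply,
    Fin.sum_univ_add]
  rw [Finset.sum_eq_zero, zero_add]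
  · simp
  · intro l _
    have : (l : ℕ) ≠ k + j := by omega
    simp [this]

theorem colsL_conjTranspose_mul_colsL {V : Matrix (Fin a) (Fin (k + n₂)) ℂ} (hV : Vᴴ * V = 1) :
    (colsL V)ᴴ * colsL V = 1 := by
  ext i j
  have := congrFun (congrFun hV (Fin.castAdd n₂ i)) (Fin.castAdd n₂ j)
  simpa [Matrix.mul_apply, colsL, Matrix.one_apply] using this

theorem colsR_conjTranspose_mul_colsR {V : Matrix (Fin a) (Fin (k + n₂)) ℂ} (hV : Vᴴ * V = 1) :
    (colsR V)ᴴ * colsR V = 1 := by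
  ext i j
  have := congrFun (congrFun hV (Fin.natAdd k i)) (Fin.natAdd k j)
  simpa [Matrix.mul_apply, colsR, Matrix.one_apply] using this

theorem colsR_conjTranspose_mul_colsL {V : Matrix (Fin a) (Fin (k + n₂)) ℂ} (hV : Vᴴ * V = 1) :
    (colsR V)ᴴ * colsL V = 0 := by
  ext i j
  have := congrFun (congrFun hV (Fin.natAdd k i)) (Fin.castAdd n₂ j)
  have hne : Fin.natAdd k i ≠ Fin.castAdd n₂ j := fun h => by
    have := congrArg Fin.val h
    simp at this
    omega
  simpa [Matrix.mul_apply, colsL, colsR, Matrix.one_apply, hne] using this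

open scoped ComplexOrder in
theorem mul_rpinv {M : Matrix (Fin a) (Fin b) ℂ} (hM : M.rank = a) : M * rpinv M = 1 := by
  have hunit : IsUnit (M * Mᴴ) := by
    rw [← Matrix.mulVec_surjective_iff_isUnit]
    refine LinearMap.range_eq_top.mp
      (Submodule.eq_top_of_finrank_eq (S := (M * Mᴴ).mulVecLin.range) ?_)
    rw [Module.finrank_fin_fun]
    exact (Matrix.rank_self_mul_conjTranspose M).trans hM
  rw [rpinv, ← Matrix.mul_assoc,
    Matrix.mul_nonsing_inv _ ((Matrix.isUnit_iff_isUnit_det _).mp hunit)]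

end Blocks

section SubspaceIteration

variable {k m₂ n₂ ρ : ℕ} {A : Matrix (Fin (k + m₂)) (Fin (k + n₂)) ℂ}
  {U : Matrix (Fin (k + m₂)) (Fin (k + m₂)) ℂ} {V : Matrix (Fin (k + n₂)) (Fin (k + n₂)) ℂ}
  {σ : ℕ → ℝ} {Ω : Matrix (Fin (k + n₂)) (Fin (k + ρ)) ℂ}
  {Q : Matrix (Fin (k + m₂)) (Fin (k + ρ)) ℂ} {R : Matrix (Fin (k + ρ)) (Fin (k + ρ)) ℂ}

theorem gram_pow_mul_eq (hU : Uᴴ * U = 1) (hV : Vᴴ * V = 1)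
    (hA : A = U * diagRect σ 0 (k + m₂) (k + n₂) * Vᴴ) (q : ℕ) :
    (A * Aᴴ) ^ q * A = U * diagRect (fun i => σ i ^ (2 * q) * σ i) 0 (k + m₂) (k + n₂) * Vᴴ := by
  induction q with
  | zero => simpa using hA
  | succ q ih =>
    rw [pow_succ', Matrix.mul_assoc, ih]
    have hσ : (fun i => σ i ^ (2 * (q + 1)) * σ i) =
        fun i => σ i ^ 2 * (σ i ^ (2 * q) * σ i) := by
      ext i; ring
    rw [hσ, ← diagRect_mul_conjTranspose_mul σ]
    set D := diagRect (fun i => σ i ^ (2 * q) * σ i) 0 (k + m₂) (k + n₂)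
    rw [hA]
    simp only [Matrix.conjTranspose_mul, Matrix.conjTranspose_conjTranspose, Matrix.mul_assoc]
    rw [← Matrix.mul_assoc Vᴴ V, hV, Matrix.one_mul, ← Matrix.mul_assoc Uᴴ U, hU, Matrix.one_mul]

theorem svd_eq_blocks (τ : ℕ → ℝ) :
    U * diagRect τ 0 (k + m₂) (k + n₂) * Vᴴ =
      colsL U * (diagonal fun i : Fin k => (τ i : ℂ)) * (colsL V)ᴴ +
        colsR U * diagRect τ k m₂ n₂ * (colsR V)ᴴ := by
  rw [mul_conjTranspose_eq_cols, colsL_mul_diagRect, colsR_mul_diagRect]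

theorem svd_mul_colsL (hV : Vᴴ * V = 1) (hA : A = U * diagRect σ 0 (k + m₂) (k + n₂) * Vᴴ) :
    A * colsL V = colsL U * diagonal fun i : Fin k => (σ i : ℂ) := by
  rw [hA, svd_eq_blocks, Matrix.add_mul, Matrix.mul_assoc _ (colsL V)ᴴ,
    Matrix.mul_assoc _ (colsR V)ᴴ, colsL_conjTranspose_mul_colsL hV,
    colsR_conjTranspose_mul_colsL hV, Matrix.mul_one, Matrix.mul_zero, add_zero]

/-- The matrix `Σ_⊥^{2q} X Σ_k^{-2q}`. -/
noncomputable def scaledTail (σ : ℕ → ℝ) (q : ℕ) (X : Matrix (Fin m₂) (Fin k) ℂ) :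
    Matrix (Fin m₂) (Fin k) ℂ :=
  (diagonal fun i : Fin m₂ => ((σ (k + i) ^ (2 * q) : ℝ) : ℂ)) *
    (X * diagonal fun i : Fin k => (((σ i ^ (2 * q))⁻¹ : ℝ) : ℂ))

/-- The sketch, suitably recombined, reproduces `A V_k` up to the tail `U_⊥ Σ_⊥^{2q} X Σ_k^{-2q}`. -/
theorem svd_mul_colsL_eq_sketch_sub (q : ℕ) (hU : Uᴴ * U = 1) (hV : Vᴴ * V = 1)
    (hA : A = U * diagRect σ 0 (k + m₂) (k + n₂) * Vᴴ) (hσ : ∀ i < k, σ i ≠ 0)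
    (hΩ : ((colsL V)ᴴ * Ω).rank = k) (hQR : (A * Aᴴ) ^ q * A * Ω = Q * R) :
    A * colsL V = Q * (R * rpinv ((colsL V)ᴴ * Ω) *
        diagonal fun i : Fin k => (((σ i ^ (2 * q))⁻¹ : ℝ) : ℂ)) -
      colsR U * scaledTail σ q
        (diagRect σ k m₂ n₂ * ((colsR V)ᴴ * Ω * rpinv ((colsL V)ᴴ * Ω))) := by
  have hpinv := mul_rpinv hΩ
  set Z := rpinv ((colsL V)ᴴ * Ω)
  set C : Matrix (Fin k) (Fin k) ℂ := diagonal fun i : Fin k => (((σ i ^ (2 * q))⁻¹ : ℝ) : ℂ)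
    with hC
  have hdiag : (diagonal fun i : Fin k => ((σ i ^ (2 * q) * σ i : ℝ) : ℂ)) * C =
      diagonal fun i : Fin k => (σ i : ℂ) := by
    rw [hC, Matrix.diagonal_mul_diagonal]
    congr 1
    ext i
    have := hσ i i.isLt
    rw [← Complex.ofReal_mul]
    congr 1
    field_simp
  have htail := diagRect_eq_diagonal_mul (fun i => σ i ^ (2 * q)) σ k m₂ n₂
  have hexp : Q * (R * Z * C) = colsL U * (diagonal fun i : Fin k => (σ i : ℂ)) +
      colsR U * scaledTail σ q (diagRect σ k m₂ n₂ * ((colsR V)ᴴ * Ω * Z)) := by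
    rw [Matrix.mul_assoc R, ← Matrix.mul_assoc Q, ← hQR, gram_pow_mul_eq hU hV hA, svd_eq_blocks,
      htail, ← hdiag, scaledTail, Matrix.add_mul, Matrix.add_mul]
    congr 1
    · have : (colsL V)ᴴ * (Ω * (Z * C)) = C := by
        rw [← Matrix.mul_assoc, ← Matrix.mul_assoc, hpinv, Matrix.one_mul]
      simp only [Matrix.mul_assoc, this]
    · simp only [Matrix.mul_assoc, hC]
  rw [svd_mul_colsL hV hA, hexp, add_sub_cancel_right]

/-- `Σ_k² ≤ (Q* A V_k)* (Q* A V_k) + N* N` with `N = Σ_⊥^{2q} X Σ_k^{-2q}`. -/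
theorem quadForm_diagonal_sq_le_add (q : ℕ) (hU : Uᴴ * U = 1) (hV : Vᴴ * V = 1)
    (hA : A = U * diagRect σ 0 (k + m₂) (k + n₂) * Vᴴ) (hσ : ∀ i < k, σ i ≠ 0)
    (hΩ : ((colsL V)ᴴ * Ω).rank = k) (hQ : Qᴴ * Q = 1)
    (hQR : (A * Aᴴ) ^ q * A * Ω = Q * R) {N : Matrix (Fin m₂) (Fin k) ℂ}
    (hN : N = scaledTail σ q
        (diagRect σ k m₂ n₂ * ((colsR V)ᴴ * Ω * rpinv ((colsL V)ᴴ * Ω)))) (y : Fin k → ℂ) :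
    quadForm (diagonal fun i : Fin k => ((σ i ^ 2 : ℝ) : ℂ)) y ≤
      quadForm ((Qᴴ * A * colsL V)ᴴ * (Qᴴ * A * colsL V)) y + quadForm (Nᴴ * N) y := by
  have hlhs : quadForm (diagonal fun i : Fin k => ((σ i ^ 2 : ℝ) : ℂ)) y =
      quadForm 1 ((A * colsL V) *ᵥ y) := by
    rw [svd_mul_colsL hV hA, ← mulVec_mulVec,
      quadForm_one_mulVec_of_isometry (colsL_conjTranspose_mul_colsL hU), ← quadForm_gram,
      Matrix.diagonal_conjTranspose, Matrix.diagonal_mul_diagonal]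
    congr 2
    ext i
    simp [sq]
  have hres : (1 - Q * Qᴴ) * (A * colsL V) = (1 - Q * Qᴴ) * (colsR U * -N) := by
    have hQ0 : (1 - Q * Qᴴ) * Q = 0 := by
      rw [Matrix.sub_mul, Matrix.mul_assoc, hQ, Matrix.one_mul, Matrix.mul_one, sub_self]
    rw [svd_mul_colsL_eq_sketch_sub q hU hV hA hσ hΩ hQR, ← hN, Matrix.mul_sub,
      ← Matrix.mul_assoc _ Q, hQ0, Matrix.zero_mul, zero_sub, Matrix.mul_neg, Matrix.mul_neg]
  rw [hlhs, quadForm_one_eq_add_residual hQ, quadForm_gram, mulVec_mulVec, ← Matrix.mul_assoc]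
  gcongr
  rw [mulVec_mulVec, hres, ← mulVec_mulVec]
  refine (quadForm_one_residual_le hQ _).trans ?_
  rw [← mulVec_mulVec, quadForm_one_mulVec_of_isometry (colsR_conjTranspose_mul_colsR hU),
    ← quadForm_gram]
  simp

/-- The singular values of `Q* A` are dominated by those of `A`. -/
theorem projected_sval_le (hU : Uᴴ * U = 1) (hV' : V * Vᴴ = 1)
    (hσ0 : ∀ i, 0 ≤ σ i) (hσm : ∀ i j, i ≤ j → σ j ≤ σ i)
    (hA : A = U * diagRect σ 0 (k + m₂) (k + n₂) * Vᴴ) (hQ : Qᴴ * Q = 1)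
    {UB : Matrix (Fin (k + ρ)) (Fin (k + ρ)) ℂ} {Vh : Matrix (Fin (k + n₂)) (Fin (k + ρ)) ℂ}
    {σh : ℕ → ℝ} (hUB : UBᴴ * UB = 1) (hVh : Vhᴴ * Vh = 1)
    (hσh0 : ∀ i, 0 ≤ σh i) (hσhm : ∀ i j, i ≤ j → σh j ≤ σh i)
    (hB : Qᴴ * A = UB * diagRect σh 0 (k + ρ) (k + ρ) * Vhᴴ) {i : ℕ} (hi : i < k + ρ) :
    σh i ≤ σ i := by
  have hanti : Antitone fun j : Fin (k + ρ) => σh j ^ 2 := fun a b hab =>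
    pow_le_pow_left₀ (hσh0 b) (hσhm a b hab) 2
  have key := diagonal_le_of_quadForm_le hanti (Vᴴ * Vh) (α := 1) (β := 1) (c := σ i ^ 2)
    (κ := fun j : Fin (k + n₂) => if (j : ℕ) < k + m₂ then σ (0 + j) * σ (0 + j) else 0)
    zero_le_one (by positivity) (fun x => ?_) (fun x => ?_) ⟨i, hi⟩ (fun j hj => ?_)
  · simp only [mul_one, one_mul] at key
    exact le_of_sq_le_sq key (hσ0 i)
  · have hσh : (diagRect σh 0 (k + ρ) (k + ρ))ᴴ * diagRect σh 0 (k + ρ) (k + ρ) =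
        diagonal fun j : Fin (k + ρ) => ((σh j ^ 2 : ℝ) : ℂ) := by
      rw [diagRect_conjTranspose_mul]
      congr 1
      ext j
      simp [sq]
    rw [← hσh, ← diagRect_conjTranspose_mul, quadForm_gram, quadForm_gram, one_mul,
      ← quadForm_one_mulVec_of_isometry hUB, ← quadForm_one_mulVec_of_isometry hU (_ *ᵥ _)]
    have h1 : UB *ᵥ diagRect σh 0 (k + ρ) (k + ρ) *ᵥ x = Qᴴ *ᵥ A *ᵥ Vh *ᵥ x := by
      rw [mulVec_mulVec (M := Qᴴ), hB]
      simp only [mulVec_mulVec, Matrix.mul_assoc, hVh, Matrix.mul_one]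
    have h2 : U *ᵥ diagRect σ 0 (k + m₂) (k + n₂) *ᵥ (Vᴴ * Vh) *ᵥ x = A *ᵥ Vh *ᵥ x := by
      simp only [hA, mulVec_mulVec, Matrix.mul_assoc]
    rw [h1, h2]
    exact quadForm_one_conjTranspose_mulVec_le hQ _
  · rw [one_mul, ← mulVec_mulVec, quadForm_one_mulVec_of_isometry
      (by rw [conjTranspose_conjTranspose, hV']), quadForm_one_mulVec_of_isometry hVh]
  · have := hσm i j hj
    split_ifs
    · rw [zero_add, ← sq]; exact pow_le_pow_left₀ (hσ0 _) this 2
    · positivity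

end SubspaceIteration

section EigenvalueBounds

variable {k l m₂ : ℕ}

/-- If `M = UB diag(σh) T` with `T` a contraction, the squares of `σh` dominate the eigenvalues of
`M* M`. -/
theorem sortedSpectral_gram_le {M : Matrix (Fin l) (Fin k) ℂ} {κ : Fin k → ℝ}
    {W : Matrix (Fin k) (Fin k) ℂ} (hM : IsSortedSpectral (Mᴴ * M) κ W)
    {UB : Matrix (Fin l) (Fin l) ℂ} {T : Matrix (Fin l) (Fin k) ℂ} {σh : ℕ → ℝ}
    (hUB : UBᴴ * UB = 1) (hσh0 : ∀ i, 0 ≤ σh i) (hσhm : ∀ i j, i ≤ j → σh j ≤ σh i)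
    (hMT : M = UB * diagRect σh 0 l l * T)
    (hT : ∀ x, quadForm 1 (T *ᵥ x) ≤ quadForm 1 x) (i : Fin k) : κ i ≤ σh i ^ 2 := by
  have key := diagonal_le_of_quadForm_le hM.antitone (T * W) (α := 1) (β := 1) (c := σh i ^ 2)
    (κ := fun j : Fin l => if (j : ℕ) < l then σh (0 + j) * σh (0 + j) else 0)
    zero_le_one (by positivity) (fun x => ?_) (fun x => ?_) i (fun j hj => ?_)
  · simpa using key
  · rw [← hM.quadForm_mulVec, ← diagRect_conjTranspose_mul, quadForm_gram, quadForm_gram, one_mul,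
      ← quadForm_one_mulVec_of_isometry hUB (diagRect σh 0 l l *ᵥ _), hMT]
    simp only [mulVec_mulVec, Matrix.mul_assoc, le_refl]
  · rw [one_mul, ← mulVec_mulVec, ← quadForm_one_mulVec_of_isometry hM.conjTranspose_mul x]
    exact hT _
  · rw [if_pos j.isLt, zero_add, ← sq]
    exact pow_le_pow_left₀ (hσh0 _) (hσhm i j hj) 2

/-- Scaling by `Σ_⊥^{2q}` and `Σ_k^{-2q}` multiplies the squared singular values by at most
`(σ_{k+1} / σ_k)^{4q}`. -/
theorem sortedSpectral_scaledTail_le {σ : ℕ → ℝ} (hk : 1 ≤ k) (hσ0 : ∀ i, 0 ≤ σ i)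
    (hσm : ∀ i j, i ≤ j → σ j ≤ σ i) (hrank : 0 < σ (k - 1)) (q : ℕ)
    {X : Matrix (Fin m₂) (Fin k) ℂ} {g ξ : Fin k → ℝ} {WG WX : Matrix (Fin k) (Fin k) ℂ}
    (hG : IsSortedSpectral ((scaledTail σ q X)ᴴ * scaledTail σ q X) g WG)
    (hX : IsSortedSpectral (Xᴴ * X) ξ WX) (hξ : ∀ i, 0 ≤ ξ i) (i : Fin k) :
    g i ≤ (σ k / σ (k - 1)) ^ (4 * q) * ξ i := by
  set C : Matrix (Fin k) (Fin k) ℂ := diagonal fun i : Fin k => (((σ i ^ (2 * q))⁻¹ : ℝ) : ℂ)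
  have key := diagonal_le_of_quadForm_le hG.antitone (WXᴴ * C * WG) (α := (σ k ^ (2 * q)) ^ 2)
    (β := ((σ (k - 1) ^ (2 * q))⁻¹) ^ 2) (c := ξ i) (κ := ξ) (by positivity) (hξ i)
    (fun x => ?_) (fun x => ?_) i (fun j hj => hX.antitone hj)
  · refine key.trans_eq ?_
    rw [show 4 * q = 2 * q * 2 by ring, pow_mul _ (2 * q), div_pow, div_eq_mul_inv]
    ring
  · rw [← hG.quadForm_mulVec, quadForm_gram, scaledTail, ← mulVec_mulVec]
    refine (quadForm_one_diagonal_mulVec_le (fun j => pow_nonneg (hσ0 _) _)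
      (fun j => pow_le_pow_left₀ (hσ0 _) (hσm k (k + j) (by omega)) _) _).trans_eq ?_
    rw [Matrix.mul_assoc, ← mulVec_mulVec (M := WXᴴ), ← hX.quadForm_eq, quadForm_gram]
    simp only [mulVec_mulVec, Matrix.mul_assoc, C]
  · rw [Matrix.mul_assoc, ← mulVec_mulVec, quadForm_one_mulVec_of_isometry
      (by rw [conjTranspose_conjTranspose, hX.mul_conjTranspose]), ← mulVec_mulVec,
      ← quadForm_one_mulVec_of_isometry hG.conjTranspose_mul x]
    refine quadForm_one_diagonal_mulVec_le (fun j => inv_nonneg.mpr (pow_nonneg (hσ0 _) _))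
      (fun j => ?_) _
    exact inv_anti₀ (by positivity) (pow_le_pow_left₀ hrank.le (hσm j (k - 1) (by omega)) _)

end EigenvalueBounds

/-- Hoffman–Wielandt type bound for the singular values, `p ≥ 2` version. -/
theorem hoffman_wielandt_schatten_sq
    {k m₂ n₂ ρ : ℕ} (q : ℕ) (hk : 1 ≤ k)
    (A : Matrix (Fin (k + m₂)) (Fin (k + n₂)) ℂ)
    (U : Matrix (Fin (k + m₂)) (Fin (k + m₂)) ℂ)
    (V : Matrix (Fin (k + n₂)) (Fin (k + n₂)) ℂ)
    (σ : ℕ → ℝ)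
    (hU : Uᴴ * U = 1) (hU' : U * Uᴴ = 1)
    (hV : Vᴴ * V = 1) (hV' : V * Vᴴ = 1)
    (hσ0 : ∀ i, 0 ≤ σ i) (hσm : ∀ i j, i ≤ j → σ j ≤ σ i)
    (hA : A = U * diagRect σ 0 (k + m₂) (k + n₂) * Vᴴ)
    (hrank : 0 < σ (k - 1)) (hgap : σ k < σ (k - 1))
    (Ω : Matrix (Fin (k + n₂)) (Fin (k + ρ)) ℂ)
    (hΩ : ((colsL V)ᴴ * Ω).rank = k)
    (Q : Matrix (Fin (k + m₂)) (Fin (k + ρ)) ℂ)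
    (R : Matrix (Fin (k + ρ)) (Fin (k + ρ)) ℂ)
    (hQ : Qᴴ * Q = 1) (hR : R.BlockTriangular id)
    (hQR : (A * Aᴴ) ^ q * A * Ω = Q * R)
    (UB : Matrix (Fin (k + ρ)) (Fin (k + ρ)) ℂ)
    (Vh : Matrix (Fin (k + n₂)) (Fin (k + ρ)) ℂ)
    (σh : ℕ → ℝ)
    (hUB : UBᴴ * UB = 1) (hUB' : UB * UBᴴ = 1)
    (hVh : Vhᴴ * Vh = 1)
    (hσh0 : ∀ i, 0 ≤ σh i) (hσhm : ∀ i j, i ≤ j → σh j ≤ σh i)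
    (hB : Qᴴ * A = UB * diagRect σh 0 (k + ρ) (k + ρ) * Vhᴴ)
    :
    ∀ p : ℝ≥0∞, 2 ≤ p →
      schatten p (diagRect σ 0 (k + m₂) (k + n₂) -
          diagRect (fun i => if i < k + ρ then σh i else 0) 0 (k + m₂) (k + n₂)) ≤
        Real.sqrt ((schatten p (diagRect σ k m₂ n₂)) ^ 2 +
          (σ k / σ (k - 1)) ^ (4 * q) * (schatten p (diagRect σ k m₂ n₂ * ((colsR V)ᴴ * Ω * rpinv ((colsL V)ᴴ * Ω)))) ^ 2) := by
  have hσk : ∀ i < k, σ i ≠ 0 := fun i hi =>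
    (hrank.trans_le (hσm i (k - 1) (by omega))).ne'
  have hσh_le : ∀ {i : ℕ}, i < k + ρ → σh i ≤ σ i := fun hi =>
    projected_sval_le hU hV' hσ0 hσm hA hQ hUB hVh hσh0 hσhm hB hi
  set X := diagRect σ k m₂ n₂ * ((colsR V)ᴴ * Ω * rpinv ((colsL V)ᴴ * Ω))
  set c : ℝ := (σ k / σ (k - 1)) ^ (4 * q)
  have hc0 : 0 ≤ c := pow_nonneg (div_nonneg (hσ0 _) (hσ0 _)) _
  set M := Qᴴ * A * colsL V with hM
  obtain ⟨eK, WK, hK⟩ := (isHermitian_conjTranspose_mul_self M).exists_isSortedSpectral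
  obtain ⟨eG, WG, hG⟩ :=
    (isHermitian_conjTranspose_mul_self (scaledTail σ q X)).exists_isSortedSpectral
  obtain ⟨eX, WX, hXs⟩ := (isHermitian_conjTranspose_mul_self X).exists_isSortedSpectral
  set κ := (isHermitian_conjTranspose_mul_self M).eigenvalues ∘ eK
  set g := (isHermitian_conjTranspose_mul_self (scaledTail σ q X)).eigenvalues ∘ eG
  set ξ := (isHermitian_conjTranspose_mul_self X).eigenvalues ∘ eX
  have hξ0 : ∀ i, 0 ≤ ξ i := fun i => eigenvalues_gram_nonneg X (eX i)
  have hg0 : ∀ i, 0 ≤ g i := fun i => eigenvalues_gram_nonneg _ (eG i)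
  have hgξ : ∀ i, g i ≤ c * ξ i :=
    sortedSpectral_scaledTail_le hk hσ0 hσm hrank q hG hXs hξ0
  have hκ : ∀ i, κ i ≤ σh i ^ 2 := sortedSpectral_gram_le hK hUB hσh0 hσhm
    (T := Vhᴴ * colsL V) (by rw [hM, hB, Matrix.mul_assoc]) fun x => by
      rw [← mulVec_mulVec]
      exact (quadForm_one_conjTranspose_mulVec_le hVh _).trans_eq
        (quadForm_one_mulVec_of_isometry (colsL_conjTranspose_mul_colsL hV) x)
  have hH : IsSortedSpectral (diagonal fun i : Fin k => ((σ i ^ 2 : ℝ) : ℂ))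
      (fun i : Fin k => σ i ^ 2) 1 :=
    ⟨fun i j hij => pow_le_pow_left₀ (hσ0 j) (hσm i j hij) 2, by simp, by simp, by simp⟩
  have hmaj := hH.sum_posPart_sub_le hK hG
    (quadForm_diagonal_sq_le_add q hU hV hA hσk hΩ hQ hQR rfl)
  set δ : Fin k → ℝ := fun i => max (σ i ^ 2 - κ i) 0
  have hδ0 : ∀ i, 0 ≤ δ i := fun i => le_max_right _ _
  have hδ : ∀ r : ℝ, 1 ≤ r → ∑ i, δ i ^ r ≤ ∑ i, g i ^ r := fun r hr =>
    sum_rpow_le_of_sum_posPart_le hδ0 hg0 (fun t ht => by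
      refine le_trans (Finset.sum_le_sum fun i _ => ?_) (hmaj t)
      refine max_le ?_ (le_max_right _ _)
      rcases max_cases (σ i ^ 2 - κ i) 0 with ⟨h, _⟩ | ⟨h, _⟩
      · exact (sub_le_sub_right h.le t).trans (le_max_left _ _)
      · exact le_trans (by linarith [h.le]) (le_max_right _ _)) hr
  rw [diagRect_sub]
  set E := diagRect (fun i => σ i - if i < k + ρ then σh i else 0) 0 (k + m₂) (k + n₂)
  have hfin : ∀ p : ℝ≥0∞, p ≠ ⊤ → 2 ≤ p → schatten p E ≤
      √(schatten p (diagRect σ k m₂ n₂) ^ 2 + c * schatten p X ^ 2) := by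
    intro p hp hp2
    have hr : 1 ≤ p.toReal / 2 := by
      have := ENNReal.toReal_mono hp hp2
      simp at this
      linarith
    refine Real.le_sqrt_of_sq_le ?_
    rw [schatten_sq_diagRect hp, schatten_sq_diagRect hp, schatten_sq_of_ne_top hp X]
    set r := p.toReal / 2
    have hr0 : 0 < r := by linarith
    have hr1 : 0 ≤ 1 / r := by positivity
    have hhead : ∑ i : Fin k, δ i ^ r ≤
        c ^ r * ∑ i, (isHermitian_conjTranspose_mul_self X).eigenvalues i ^ r := by
      refine (hδ r hr).trans ?_
      rw [← Equiv.sum_comp eX fun i => (isHermitian_conjTranspose_mul_self X).eigenvalues i ^ r,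
        Finset.mul_sum]
      refine Finset.sum_le_sum fun i _ => ?_
      exact (Real.rpow_le_rpow (hg0 i) (hgξ i) hr0.le).trans_eq (Real.mul_rpow hc0 (hξ0 i))
    set a := ∑ i, (isHermitian_conjTranspose_mul_self X).eigenvalues i ^ r
    set b := ∑ j : Fin n₂, (if (j : ℕ) < m₂ then σ (k + j) ^ 2 else 0) ^ r
    have ha : 0 ≤ a := Finset.sum_nonneg fun i _ =>
      Real.rpow_nonneg (eigenvalues_gram_nonneg X i) _
    have hb : 0 ≤ b := Finset.sum_nonneg fun j _ => Real.rpow_nonneg (by positivity) _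
    have hsplit : ∑ j : Fin (k + n₂), (if (j : ℕ) < k + m₂ then
        (σ (0 + j) - if 0 + (j : ℕ) < k + ρ then σh (0 + j) else 0) ^ 2 else 0) ^ r ≤
          b + c ^ r * a := by
      rw [Fin.sum_univ_add, add_comm]
      refine add_le_add (Finset.sum_le_sum fun j _ => ?_)
        (le_trans (Finset.sum_le_sum fun i _ => ?_) hhead)
      · refine Real.rpow_le_rpow (by positivity) ?_ hr0.le
        simp only [Fin.val_natAdd, zero_add, add_lt_add_iff_left]
        split_ifs with h1 h2
        · have := hσh_le (i := k + j) (by omega)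
          exact pow_le_pow_left₀ (by linarith) (by linarith [hσh0 (k + j)]) 2
        · simp
        · rfl
      · refine Real.rpow_le_rpow (by positivity) ?_ hr0.le
        have h1 : (i : ℕ) < k + m₂ := by omega
        have h2 : (i : ℕ) < k + ρ := by omega
        simp only [Fin.val_castAdd, zero_add, if_pos h1, if_pos h2]
        refine le_trans ?_ (le_max_left _ _)
        nlinarith [hσh_le h2, hσh0 i, hκ i]
    calc _ ≤ (b + c ^ r * a) ^ (1 / r) :=
          Real.rpow_le_rpow (Finset.sum_nonneg fun j _ => Real.rpow_nonneg (by positivity) _)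
            hsplit hr1
      _ ≤ b ^ (1 / r) + (c ^ r * a) ^ (1 / r) :=
          Real.rpow_add_le_add_rpow hb (by positivity) hr1 ((div_le_one hr0).mpr hr)
      _ = b ^ (1 / r) + c * a ^ (1 / r) := by
          rw [Real.mul_rpow (by positivity) ha, ← Real.rpow_mul hc0, mul_one_div_cancel hr0.ne',
            Real.rpow_one]
  intro p hp2
  rcases eq_or_ne p ⊤ with rfl | hp
  · refine le_of_tendsto_of_tendsto (tendsto_schatten_top E)
      ((((tendsto_schatten_top (diagRect σ k m₂ n₂)).pow 2).add
        (((tendsto_schatten_top X).pow 2).const_mul c)).sqrt) ?_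
    filter_upwards [Filter.eventually_ge_atTop 2] with p hp2
    refine hfin _ ENNReal.ofReal_ne_top ?_
    rw [← ENNReal.ofReal_ofNat]
    exact ENNReal.ofReal_le_ofReal hp2
  · exact hfin p hp hp2
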